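/- The sequence {V_n^2 − V_{n−1}V_{n+1}}_{n≥2} is strictly log-convex; that is, for every integer n ≥ 3, (V_n^2 − V_{n−1}V_{n+1})^2 < (V_{n−1}^2 − V_{n−2}V_n)(V_{n+1}^2 − V_n V_{n+2}). -/

import Mathlib

/-!
Write `x n = V n / V (n - 1)`.  The recurrence reads `x (n + 1) = A - B / x n` with `A → 24`,
`B → 128`; near the attracting fixed point `16` this map is a contraction, and `x n` has an
asymptotic expansion `16 + 16 / n ^ 3 + 48 / n ^ 4 + 192 / n ^ 5 + 1008 / n ^ 6 + 6768 / n ^ 7 + ⋯`.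
Truncating it and putting a suitable constant in front of `1 / n ^ 8` gives lower and upper bounds
for `x n` that the recurrence preserves (`step_lower`, `step_upper`, `ratio_bounds`).

With `r n = V (n - 1) * V (n + 1) / V n ^ 2`, the claim is
`(1 / r n - 1) ^ 2 < (1 - r (n - 1)) * (1 - r (n + 1))`.  Both `1 - r n` and `1 / r n - 1` are
`3 / n ^ 4 + 6 / n ^ 5 + 40 / n ^ 6 + 240 / n ^ 7 + O(1 / n ^ 8)`, so the two sides differ by a
relative amount `4 / n ^ 2`, and explicit constants in front of `1 / n ^ 8` (`gap_lower`,
`gap_upper`) decide the inequality for `n ≥ 21` (`gap_compare`).  For `3 ≤ n ≤ 20` the exact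
integer values of `V` are used.
-/

namespace FLF

/-- `n ^ 8` times the truncated expansion of `V n / V (n - 1)`, with coefficient `l` for
`1 / n ^ 8`. -/
def ratioPoly (l n : ℝ) : ℝ :=
  16 * n ^ 8 + 16 * n ^ 5 + 48 * n ^ 4 + 192 * n ^ 3 + 1008 * n ^ 2 + 6768 * n + l

/-- `n ^ 8` times the truncated expansion of `1 - V (n - 1) * V (n + 1) / V n ^ 2`, with
coefficient `a` for `1 / n ^ 8`. -/
def gapPoly (a n : ℝ) : ℝ := 3 * n ^ 4 + 6 * n ^ 3 + 40 * n ^ 2 + 240 * n + a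

/-- Coefficient of `V (n + 1)` in the recurrence centred at `n`. -/
def ck (n : ℝ) : ℝ := n * (n + 1) ^ 2

/-- Coefficient of `V n` in the recurrence centred at `n`. -/
def ca (n : ℝ) : ℝ := 8 * n * (3 * (n + 1) ^ 2 - (n + 1) - 1)

/-- Minus the coefficient of `V (n - 1)` in the recurrence centred at `n`. -/
def cb (n : ℝ) : ℝ := 128 * (n - 1) * (n + 1) ^ 2

/-! ### Propagating bounds through the recurrence -/

lemma step_lower {k a b c d X Y p q s : ℝ} (hk : 0 < k) (hX : 0 < X) (hb : 0 ≤ b) (hd : 0 ≤ d)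
    (hq : 0 ≤ q) (hs : k * s = a * q - b * p) (h : X * p ≤ c * q)
    (hpoly : 0 ≤ d * (a * X - b * c) - Y * X * k) : Y * q ≤ d * s := by
  have e : k * X * (d * s - Y * q)
      = q * (d * (a * X - b * c) - Y * X * k) + d * b * (c * q - X * p) := by
    linear_combination d * X * hs
  have h1 : 0 ≤ k * X * (d * s - Y * q) := by
    rw [e]
    have := mul_nonneg hq hpoly
    have := mul_nonneg (mul_nonneg hd hb) (sub_nonneg.2 h)
    linarith
  linarith [nonneg_of_mul_nonneg_right h1 (mul_pos hk hX)]

lemma step_upper {k a b c d X Y p q s : ℝ} (hk : 0 < k) (hX : 0 < X) (hb : 0 ≤ b) (hd : 0 ≤ d)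
    (hq : 0 ≤ q) (hs : k * s = a * q - b * p) (h : c * q ≤ X * p)
    (hpoly : 0 ≤ Y * X * k - d * (a * X - b * c)) : d * s ≤ Y * q := by
  have e : k * X * (Y * q - d * s)
      = q * (Y * X * k - d * (a * X - b * c)) + d * b * (X * p - c * q) := by
    linear_combination -d * X * hs
  have h1 : 0 ≤ k * X * (Y * q - d * s) := by
    rw [e]
    have := mul_nonneg hq hpoly
    have := mul_nonneg (mul_nonneg hd hb) (sub_nonneg.2 h)
    linarith
  linarith [nonneg_of_mul_nonneg_right h1 (mul_pos hk hX)]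

/-- As a function of `x = q / p`, the quantity `1 - s * p / q ^ 2` is at least `f / c` as soon as
it is so at the lower bound `X / c` of `x`. -/
lemma gap_of_lower {k a b c f X p q s : ℝ} (hk : 0 < k) (hc : 0 < c) (hp : 0 ≤ p) (hcf : f ≤ c)
    (hs : k * s = a * q - b * p) (h : X * p ≤ c * q)
    (hmono : 0 ≤ 2 * k * (c - f) * X - c ^ 2 * a)
    (hpoly : 0 ≤ k * (c - f) * X ^ 2 - c ^ 2 * a * X + c ^ 3 * b) :
    f * q ^ 2 ≤ c * (q ^ 2 - p * s) := by
  have e : k * c ^ 2 * (c * (q ^ 2 - p * s) - f * q ^ 2)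
      = p ^ 2 * (k * (c - f) * X ^ 2 - c ^ 2 * a * X + c ^ 3 * b)
        + (c * q - X * p) * p * (2 * k * (c - f) * X - c ^ 2 * a)
        + k * (c - f) * (c * q - X * p) ^ 2 := by
    linear_combination -c ^ 3 * p * hs
  have h1 : 0 ≤ k * c ^ 2 * (c * (q ^ 2 - p * s) - f * q ^ 2) := by
    rw [e]
    have := mul_nonneg (sq_nonneg p) hpoly
    have := mul_nonneg (mul_nonneg (sub_nonneg.2 h) hp) hmono
    have := mul_nonneg (mul_nonneg hk.le (sub_nonneg.2 hcf)) (sq_nonneg (c * q - X * p))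
    linarith
  linarith [nonneg_of_mul_nonneg_right h1 (by positivity)]

/-- As a function of `x = q / p`, the quantity `q ^ 2 / (s * p) - 1` is at most `f / c` as soon as
it is so at the upper bound `X / c` of `x`. -/
lemma gap_of_upper {k a b c f X W p q s : ℝ} (hk : 0 < k) (hc : 0 < c) (hp : 0 ≤ p)
    (hs : k * s = a * q - b * p) (h : c * q ≤ X * p) (hW : W * p ≤ c * q)
    (hmono : 0 ≤ k * (X + W) - (c + f) * a)
    (hpoly : 0 ≤ (c + f) * (a * X - b * c) - k * X ^ 2) :
    c * (q ^ 2 - p * s) ≤ f * (p * s) := by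
  have e : k * c * (f * (p * s) - c * (q ^ 2 - p * s))
      = p ^ 2 * ((c + f) * (a * X - b * c) - k * X ^ 2)
        + (X * p - c * q) * (p * (k * (X + W) - (c + f) * a) + k * (c * q - W * p)) := by
    linear_combination c * (c + f) * p * hs
  have h1 : 0 ≤ k * c * (f * (p * s) - c * (q ^ 2 - p * s)) := by
    rw [e]
    have h2 := mul_nonneg (sq_nonneg p) hpoly
    have h3 := mul_nonneg hp hmono
    have h4 := mul_nonneg hk.le (sub_nonneg.2 hW)
    have h5 := mul_nonneg (sub_nonneg.2 h) (add_nonneg h3 h4)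
    linarith
  linarith [nonneg_of_mul_nonneg_right h1 (mul_pos hk hc)]

/-! ### Polynomial inequalities for `n ≥ 20`

After the substitution `n = m + 20` all coefficients are nonnegative. -/

lemma exists_shift {n : ℝ} (hn : 20 ≤ n) : ∃ m : ℝ, 0 ≤ m ∧ n = m + 20 :=
  ⟨n - 20, by linarith, by ring⟩

lemma poly_lower {n : ℝ} (hn : 20 ≤ n) :
    0 ≤ (n + 1) ^ 8 * (ca n * ratioPoly 50000 n - cb n * n ^ 8)
      - ratioPoly 50000 (n + 1) * ratioPoly 50000 n * ck n := by
  obtain ⟨m, hm, rfl⟩ := exists_shift hn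
  unfold ca cb ck ratioPoly
  ring_nf
  positivity

lemma poly_upper {n : ℝ} (hn : 20 ≤ n) :
    0 ≤ ratioPoly 130000 (n + 1) * ratioPoly 130000 n * ck n
      - (n + 1) ^ 8 * (ca n * ratioPoly 130000 n - cb n * n ^ 8) := by
  obtain ⟨m, hm, rfl⟩ := exists_shift hn
  unfold ca cb ck ratioPoly
  ring_nf
  positivity

lemma poly_gap_lower {n : ℝ} (hn : 20 ≤ n) :
    0 ≤ ck n * (n ^ 8 - gapPoly 1700 n) * ratioPoly 50000 n ^ 2
      - (n ^ 8) ^ 2 * ca n * ratioPoly 50000 n + (n ^ 8) ^ 3 * cb n := by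
  obtain ⟨m, hm, rfl⟩ := exists_shift hn
  unfold ca cb ck ratioPoly gapPoly
  ring_nf
  positivity

lemma poly_gap_lower_mono {n : ℝ} (hn : 20 ≤ n) :
    0 ≤ 2 * ck n * (n ^ 8 - gapPoly 1700 n) * ratioPoly 50000 n - (n ^ 8) ^ 2 * ca n := by
  obtain ⟨m, hm, rfl⟩ := exists_shift hn
  unfold ca ck ratioPoly gapPoly
  ring_nf
  positivity

lemma gapPoly_le {n : ℝ} (hn : 20 ≤ n) : gapPoly 1700 n ≤ n ^ 8 := by
  rw [← sub_nonneg]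
  obtain ⟨m, hm, rfl⟩ := exists_shift hn
  unfold gapPoly
  ring_nf
  positivity

lemma poly_gap_upper {n : ℝ} (hn : 20 ≤ n) :
    0 ≤ (n ^ 8 + gapPoly 4500 n) * (ca n * ratioPoly 130000 n - cb n * n ^ 8)
      - ck n * ratioPoly 130000 n ^ 2 := by
  obtain ⟨m, hm, rfl⟩ := exists_shift hn
  unfold ca cb ck ratioPoly gapPoly
  ring_nf
  positivity

lemma poly_gap_upper_mono {n : ℝ} (hn : 20 ≤ n) :
    0 ≤ ck n * (ratioPoly 130000 n + ratioPoly 50000 n) - (n ^ 8 + gapPoly 4500 n) * ca n := by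
  obtain ⟨m, hm, rfl⟩ := exists_shift hn
  unfold ca ck ratioPoly gapPoly
  ring_nf
  positivity

lemma gap_compare {n : ℝ} (hn : 20 ≤ n) :
    gapPoly 4500 n ^ 2 * ((n - 1) ^ 8 * (n + 1) ^ 8)
      < gapPoly 1700 (n - 1) * gapPoly 1700 (n + 1) * (n ^ 8) ^ 2 := by
  rw [← sub_pos]
  obtain ⟨m, hm, rfl⟩ := exists_shift hn
  unfold gapPoly
  ring_nf
  positivity

/-! ### Exact initial values -/

/-- The pair `(V n, V (n + 1))` as integers.  The integer division is checked to be exact up to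
`V 23` by `val_rec`. -/
def val : ℕ → ℤ × ℤ
  | 0 => (1, 8)
  | n + 1 =>
    ((val n).2,
      (8 * (n + 1) * (3 * (n + 2) ^ 2 - (n + 2) - 1) * (val n).2
        - 128 * n * (n + 2) ^ 2 * (val n).1) / ((n + 1) * (n + 2) ^ 2))

lemma val_rec : ∀ n : ℕ, n < 22 →
    ((n : ℤ) + 1) * (n + 2) ^ 2 * (val (n + 1)).2
      = 8 * (n + 1) * (3 * (n + 2) ^ 2 - (n + 2) - 1) * (val n).2
        - 128 * n * (n + 2) ^ 2 * (val n).1 := by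
  decide +kernel

lemma val_ineq : ∀ n : ℕ, n < 18 →
    ((val (n + 3)).1 ^ 2 - (val (n + 2)).1 * (val (n + 4)).1) ^ 2 <
      ((val (n + 2)).1 ^ 2 - (val (n + 1)).1 * (val (n + 3)).1) *
        ((val (n + 4)).1 ^ 2 - (val (n + 3)).1 * (val (n + 5)).1) := by
  decide +kernel

section

variable {V : ℕ → ℝ}

/-- The recurrence for `V`, centred at `j + 1` so that no index is subtracted. -/
def Rec (V : ℕ → ℝ) : Prop :=
  ∀ j : ℕ, ck (j + 1) * V (j + 2) = ca (j + 1) * V (j + 1) - cb (j + 1) * V j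

lemma eq_val (hV0 : V 0 = 1) (hV1 : V 1 = 8) (h : Rec V) :
    ∀ n ≤ 22, V n = (val n).1 ∧ V (n + 1) = (val n).2 := by
  intro n
  induction n with
  | zero => intro _; simp [val, hV0, hV1]
  | succ n ih =>
    intro hn
    obtain ⟨h1, h2⟩ := ih (by omega)
    refine ⟨h2, ?_⟩
    have hr := h n
    have hv := congrArg (Int.cast (R := ℝ)) (val_rec n (by omega))
    push_cast at hv
    rw [h1, h2] at hr
    unfold ck ca cb at hr
    have hpos : ((n : ℝ) + 1) * (n + 2) ^ 2 ≠ 0 := by positivity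
    apply mul_left_cancel₀ hpos
    rw [hv]
    linear_combination hr

/-! ### Bounds for all large indices -/

/-- The ratio bounds at `n = j + 20`. -/
lemma ratio_bounds (hV0 : V 0 = 1) (hV1 : V 1 = 8) (h : Rec V) (j : ℕ) :
    0 < V (j + 19) ∧ 0 < V (j + 20) ∧
      ratioPoly 50000 (j + 20) * V (j + 19) ≤ ((j : ℝ) + 20) ^ 8 * V (j + 20) ∧
      ((j : ℝ) + 20) ^ 8 * V (j + 20) ≤ ratioPoly 130000 (j + 20) * V (j + 19) := by
  induction j with
  | zero =>
    obtain ⟨h1, h2⟩ := eq_val hV0 hV1 h 19 (by norm_num)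
    have e1 : 0 < (val 19).1 := by decide +kernel
    have e2 : 0 < (val 19).2 := by decide +kernel
    have e3 : (16 * 20 ^ 8 + 16 * 20 ^ 5 + 48 * 20 ^ 4 + 192 * 20 ^ 3 + 1008 * 20 ^ 2 + 6768 * 20
      + 50000) * (val 19).1 ≤ 20 ^ 8 * (val 19).2 := by decide +kernel
    have e4 : 20 ^ 8 * (val 19).2 ≤ (16 * 20 ^ 8 + 16 * 20 ^ 5 + 48 * 20 ^ 4 + 192 * 20 ^ 3
      + 1008 * 20 ^ 2 + 6768 * 20 + 130000) * (val 19).1 := by decide +kernel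
    simp only [zero_add, Nat.cast_zero, ratioPoly]
    norm_num only at h1 h2
    rw [h1, h2]
    exact ⟨by exact_mod_cast e1, by exact_mod_cast e2, by exact_mod_cast e3,
      by exact_mod_cast e4⟩
  | succ j ih =>
    obtain ⟨hp, hq, hl, hu⟩ := ih
    have hj : (20 : ℝ) ≤ (j : ℝ) + 20 := by linarith [(Nat.cast_nonneg j : (0 : ℝ) ≤ j)]
    have hr := h (j + 19)
    have e : ((j + 19 : ℕ) : ℝ) + 1 = (j : ℝ) + 20 := by push_cast; ring
    rw [e] at hr
    have e' : ((j + 1 : ℕ) : ℝ) + 20 = (j : ℝ) + 20 + 1 := by push_cast; ring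
    rw [e', show j + 1 + 19 = j + 20 by ring, show j + 1 + 20 = j + 21 by ring]
    set n : ℝ := (j : ℝ) + 20
    have hk : 0 < ck n := by unfold ck; positivity
    have hb : 0 ≤ cb n := by
      have : 0 ≤ n - 1 := by linarith
      unfold cb; positivity
    have hX : 0 < ratioPoly 50000 n := by unfold ratioPoly; positivity
    have hX' : 0 < ratioPoly 130000 n := by unfold ratioPoly; positivity
    have hY : 0 < ratioPoly 50000 (n + 1) := by unfold ratioPoly; positivity
    have hd : 0 < (n + 1) ^ 8 := by positivity
    have hlow := step_lower hk hX hb hd.le hq.le hr hl (poly_lower hj)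
    have hup := step_upper hk hX' hb hd.le hq.le hr hu (poly_upper hj)
    exact ⟨hq, pos_of_mul_pos_right ((mul_pos hY hq).trans_le hlow) hd.le, hlow, hup⟩

lemma gap_lower (hV0 : V 0 = 1) (hV1 : V 1 = 8) (h : Rec V) (j : ℕ) :
    gapPoly 1700 (j + 20) * V (j + 20) ^ 2
      ≤ ((j : ℝ) + 20) ^ 8 * (V (j + 20) ^ 2 - V (j + 19) * V (j + 21)) := by
  obtain ⟨hp, hq, hl, hu⟩ := ratio_bounds hV0 hV1 h j
  have hj : (20 : ℝ) ≤ (j : ℝ) + 20 := by linarith [(Nat.cast_nonneg j : (0 : ℝ) ≤ j)]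
  have hr := h (j + 19)
  rw [show ((j + 19 : ℕ) : ℝ) + 1 = (j : ℝ) + 20 by push_cast; ring] at hr
  exact gap_of_lower (by unfold ck; positivity) (by positivity) hp.le (gapPoly_le hj) hr hl
    (poly_gap_lower_mono hj) (poly_gap_lower hj)

lemma gap_upper (hV0 : V 0 = 1) (hV1 : V 1 = 8) (h : Rec V) (j : ℕ) :
    ((j : ℝ) + 20) ^ 8 * (V (j + 20) ^ 2 - V (j + 19) * V (j + 21))
      ≤ gapPoly 4500 (j + 20) * (V (j + 19) * V (j + 21)) := by
  obtain ⟨hp, hq, hl, hu⟩ := ratio_bounds hV0 hV1 h j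
  have hj : (20 : ℝ) ≤ (j : ℝ) + 20 := by linarith [(Nat.cast_nonneg j : (0 : ℝ) ≤ j)]
  have hr := h (j + 19)
  rw [show ((j + 19 : ℕ) : ℝ) + 1 = (j : ℝ) + 20 by push_cast; ring] at hr
  exact gap_of_upper (by unfold ck; positivity) (by positivity) hp.le hr hu hl
    (poly_gap_upper_mono hj) (poly_gap_upper hj)

lemma large (hV0 : V 0 = 1) (hV1 : V 1 = 8) (h : Rec V) (j : ℕ) :
    (V (j + 21) ^ 2 - V (j + 20) * V (j + 22)) ^ 2 <
      (V (j + 20) ^ 2 - V (j + 19) * V (j + 21)) *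
        (V (j + 22) ^ 2 - V (j + 21) * V (j + 23)) := by
  obtain ⟨-, hp, -, -⟩ := ratio_bounds hV0 hV1 h j
  obtain ⟨-, hs, -, -⟩ := ratio_bounds hV0 hV1 h (j + 2)
  have h1 := gap_lower hV0 hV1 h j
  have h2 := gap_lower hV0 hV1 h (j + 1)
  have h2' := gap_upper hV0 hV1 h (j + 1)
  have h3 := gap_lower hV0 hV1 h (j + 2)
  have hj : (0 : ℝ) ≤ j := Nat.cast_nonneg j
  have hc := gap_compare (n := (j : ℝ) + 21) (by linarith)
  rw [show ((j + 1 : ℕ) : ℝ) + 20 = (j : ℝ) + 21 by push_cast; ring] at h2 h2'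
  rw [show ((j + 2 : ℕ) : ℝ) + 20 = (j : ℝ) + 22 by push_cast; ring] at h3
  rw [show (j : ℝ) + 21 - 1 = j + 20 by ring, show (j : ℝ) + 21 + 1 = j + 22 by ring] at hc
  simp only [show j + 1 + 19 = j + 20 by ring, show j + 1 + 20 = j + 21 by ring,
    show j + 1 + 21 = j + 22 by ring, show j + 2 + 21 = j + 23 by ring] at h2 h2' h3 hs
  have f1 : 0 < gapPoly 1700 ((j : ℝ) + 20) := by unfold gapPoly; positivity
  have f2 : 0 < gapPoly 1700 ((j : ℝ) + 21) := by unfold gapPoly; positivity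
  have f3 : 0 < gapPoly 1700 ((j : ℝ) + 22) := by unfold gapPoly; positivity
  set P := V (j + 20)
  set S := V (j + 22)
  set D1 := P ^ 2 - V (j + 19) * V (j + 21)
  set D2 := V (j + 21) ^ 2 - P * S
  set D3 := S ^ 2 - V (j + 21) * V (j + 23)
  set F1 := gapPoly 1700 ((j : ℝ) + 20)
  set F3 := gapPoly 1700 ((j : ℝ) + 22)
  set G := gapPoly 4500 ((j : ℝ) + 21)
  set c1 := ((j : ℝ) + 20) ^ 8
  set c2 := ((j : ℝ) + 21) ^ 8
  set c3 := ((j : ℝ) + 22) ^ 8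
  have c1p : 0 < c1 := by positivity
  have c2p : 0 < c2 := by positivity
  have c3p : 0 < c3 := by positivity
  have hD2 : 0 ≤ c2 * D2 := le_trans (by positivity) h2
  have hsq : (c2 * D2) ^ 2 ≤ (G * (P * S)) ^ 2 := pow_le_pow_left₀ hD2 h2' 2
  have hprod : (F1 * P ^ 2) * (F3 * S ^ 2) ≤ (c1 * D1) * (c3 * D3) :=
    mul_le_mul h1 h3 (by positivity) (le_trans (by positivity) h1)
  have hPS : 0 < P ^ 2 * S ^ 2 := by positivity
  -- All three gaps are compared after scaling by `c1 * c2 ^ 2 * c3`.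
  have hfin : (c1 * c2 ^ 2 * c3) * D2 ^ 2 < (c1 * c2 ^ 2 * c3) * (D1 * D3) := by
    calc (c1 * c2 ^ 2 * c3) * D2 ^ 2 = (c1 * c3) * (c2 * D2) ^ 2 := by ring
      _ ≤ (c1 * c3) * (G * (P * S)) ^ 2 := by gcongr
      _ = (G ^ 2 * (c1 * c3)) * (P ^ 2 * S ^ 2) := by ring
      _ < (F1 * F3 * c2 ^ 2) * (P ^ 2 * S ^ 2) := by gcongr
      _ = c2 ^ 2 * ((F1 * P ^ 2) * (F3 * S ^ 2)) := by ring
      _ ≤ c2 ^ 2 * ((c1 * D1) * (c3 * D3)) := by gcongr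
      _ = (c1 * c2 ^ 2 * c3) * (D1 * D3) := by ring
  exact lt_of_mul_lt_mul_left hfin (by positivity)

end

end FLF

/-- The sequence `{V_n^2 - V_{n-1} V_{n+1}}_{n ≥ 2}` is strictly log-convex, where
`{V_n}` is the Fennessey-Larcombe-French sequence. -/
theorem stmt_0 (V : ℕ → ℝ) (hV0 : V 0 = 1) (hV1 : V 1 = 8)
    (hrec : ∀ n : ℕ, 2 ≤ n →
      ((n : ℝ) - 1) * (n : ℝ) ^ 2 * V n =
        8 * ((n : ℝ) - 1) * (3 * (n : ℝ) ^ 2 - (n : ℝ) - 1) * V (n - 1)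
          - 128 * ((n : ℝ) - 2) * (n : ℝ) ^ 2 * V (n - 2)) :
    ∀ n : ℕ, 3 ≤ n →
      (V n ^ 2 - V (n - 1) * V (n + 1)) ^ 2 <
        (V (n - 1) ^ 2 - V (n - 2) * V n) * (V (n + 1) ^ 2 - V n * V (n + 2)) := by
  intro n hn
  have h : FLF.Rec V := by
    intro j
    have hj := hrec (j + 2) (by omega)
    rw [show j + 2 - 1 = j + 1 by omega, show j + 2 - 2 = j by omega] at hj
    push_cast at hj
    unfold FLF.ck FLF.ca FLF.cb
    linear_combination hj
  rcases lt_or_ge n 21 with hlt | hge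
  · obtain ⟨i, rfl⟩ : ∃ i, n = i + 3 := ⟨n - 3, by omega⟩
    have hv := FLF.val_ineq i (by omega)
    have e := FLF.eq_val hV0 hV1 h
    rw [show i + 3 - 1 = i + 2 by omega, show i + 3 - 2 = i + 1 by omega,
      show i + 3 + 1 = i + 4 by ring, show i + 3 + 2 = i + 5 by ring,
      (e (i + 1) (by omega)).1, (e (i + 2) (by omega)).1, (e (i + 3) (by omega)).1,
      (e (i + 4) (by omega)).1, (e (i + 5) (by omega)).1]
    exact_mod_cast hv
  · obtain ⟨j, rfl⟩ : ∃ j, n = j + 21 := ⟨n - 21, by omega⟩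
    exact FLF.large hV0 hV1 h j
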